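/- For every L > 0 there exist constants c₁ > 0 and c₂ > 0, depending only on L, with the following property: let ε ∈ (0,1], K > 0, T > 0, and let v : [0, T] × ℝ → ℝ be smooth, L-periodic in x, satisfy ∂ₜv = −∂ₓ( f_ε(v) ∂ₓ³ v ) on [0, T] × ℝ, and satisfy 0 < v(t,x) ≤ K for all (t,x). Set ū := (1/L)∫₀^L v(0,x) dx, a := ū²/√(ε + K²), and J(t) := (1/2)∫₀^L (∂ₓ v(t,x))² dx. Then for every t ∈ [0, T], J(t) ≤ e^{−c₁ a² t} J(0) + c₂ √ε · a · ∫₀^t ∫₀^L (∂ₓ² v(s,x))² dx ds. -/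

import Mathlib

open intervalIntegral in
theorem cs_aux (f : ℝ → ℝ) (hf : Continuous f) (a b : ℝ) (hab : a ≤ b) :
    (∫ x in a..b, f x) ^ 2 ≤ (b - a) * ∫ x in a..b, f x ^ 2 := by
  rcases hab.eq_or_lt with rfl | h
  · simp
  have hb : 0 < b - a := by linarith
  set c := (∫ x in a..b, f x) / (b - a) with hc
  have h0 : 0 ≤ ∫ x in a..b, (f x - c) ^ 2 :=
    integral_nonneg hab (fun x _ => sq_nonneg _)
  have h1 : ∫ x in a..b, (f x - c) ^ 2 =
      (∫ x in a..b, f x ^ 2) - 2 * c * (∫ x in a..b, f x) + (b - a) * c ^ 2 := by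
    have : ∀ x, (f x - c) ^ 2 = f x ^ 2 - 2 * c * f x + c ^ 2 := fun x => by ring
    simp only [this]
    rw [integral_add, integral_sub, integral_const_mul, integral_const]
    · simp
    all_goals exact Continuous.intervalIntegrable (by fun_prop) _ _
  have h2 : (∫ x in a..b, f x) = c * (b - a) := by rw [hc]; field_simp
  rw [h1, h2] at h0
  rw [h2]
  nlinarith

open intervalIntegral in
theorem mono_aux (f : ℝ → ℝ) (hf : Continuous f) (h0 : ∀ x, 0 ≤ f x) (L : ℝ)
    (hp : Function.Periodic f L) (a b : ℝ) (hab : a ≤ b) (hb : b ≤ a + L) :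
    ∫ x in a..b, f x ≤ ∫ x in (0:ℝ)..L, f x := by
  have h1 : ∫ x in a..(a+L), f x = ∫ x in (0:ℝ)..L, f x := by
    have := hp.intervalIntegral_add_eq a 0
    simpa using this
  rw [← h1]
  exact integral_mono_interval le_rfl hab hb (Filter.Eventually.of_forall h0)
    (hf.intervalIntegrable _ _)

open intervalIntegral in
theorem poinc_aux (L : ℝ) (hL : 0 < L) (f f' : ℝ → ℝ) (hf : ∀ x, HasDerivAt f (f' x) x)
    (hc : Continuous f') (hp : Function.Periodic f L) (hp' : Function.Periodic f' L)
    (z : ℝ) (hz : f z = 0) (x : ℝ) :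
    f x ^ 2 ≤ L * ∫ x in (0:ℝ)..L, f' x ^ 2 := by
  obtain ⟨y, hy, hxy⟩ := hp.exists_mem_Ico hL x z
  rw [hxy]
  have h1 : f y = ∫ s in z..y, f' s := by
    rw [integral_eq_sub_of_hasDerivAt (fun s _ => hf s) (hc.intervalIntegrable _ _), hz, sub_zero]
  have h2 := cs_aux f' hc z y hy.1
  have h3 := mono_aux (fun x => f' x ^ 2) (by fun_prop) (fun x => sq_nonneg _) L
    (fun x => by simp only [hp' x]) z y hy.1 hy.2.le
  have h4 : 0 ≤ ∫ x in z..y, f' x ^ 2 :=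
    integral_nonneg hy.1 (fun x _ => sq_nonneg _)
  rw [h1]
  have h5 : y - z ≤ L := by linarith [hy.2]
  calc _ ≤ _ := h2
    _ ≤ L * ∫ x in z..y, f' x ^ 2 := by gcongr
    _ ≤ _ := by gcongr

theorem rolle_aux (L : ℝ) (hL : 0 < L) (f f' : ℝ → ℝ) (hf : ∀ x, HasDerivAt f (f' x) x)
    (hp : Function.Periodic f L) : ∃ z, f' z = 0 := by
  obtain ⟨z, _, hz⟩ := exists_hasDerivAt_eq_zero (f := f) (f' := f') hL
    (fun x _ => (hf x).continuousAt.continuousWithinAt)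
    (by have := hp 0; simpa using this.symm) (fun x _ => hf x)
  exact ⟨z, hz⟩

theorem periodic_deriv_aux (L : ℝ) (f f' : ℝ → ℝ) (hf : ∀ x, HasDerivAt f (f' x) x)
    (hp : Function.Periodic f L) : Function.Periodic f' L := by
  intro x
  have h1 : HasDerivAt (fun y => f (y + L)) (f' (x + L)) x := (hf (x + L)).comp_add_const x L
  have h2 : (fun y => f (y + L)) = f := funext hp
  rw [h2] at h1
  exact h1.unique (hf x)

open intervalIntegral in
/-- Slope bound at points with nonpositive derivative. -/
theorem slope_neg_aux (L : ℝ) (hL : 0 < L) (f f1 f2 : ℝ → ℝ) (hf : ∀ x, HasDerivAt f (f1 x) x)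
    (hf1 : ∀ x, HasDerivAt f1 (f2 x) x) (hc : Continuous f2)
    (hp : Function.Periodic f L) (hpos : ∀ x, 0 < f x) (y : ℝ) (hy : f1 y ≤ 0) :
    |f1 y| ^ 3 ≤ 3 * f y * ∫ x in (0:ℝ)..L, f2 x ^ 2 := by
  have hp1 := periodic_deriv_aux L f f1 hf hp
  have hp2 := periodic_deriv_aux L f1 f2 hf1 hp1
  obtain ⟨z, hz⟩ := rolle_aux L hL f f1 hf hp
  have hP := poinc_aux L hL f1 f2 hf1 hc hp1 hp2 z hz y
  set E := ∫ x in (0:ℝ)..L, f2 x ^ 2 with hE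
  have hE0 : 0 ≤ E := integral_nonneg hL.le (fun x _ => sq_nonneg _)
  rw [abs_of_nonpos hy]
  obtain ⟨p, hpdef⟩ : ∃ p, p = - f1 y := ⟨_, rfl⟩
  rw [← hpdef]
  have hp0 : 0 ≤ p := by linarith
  have hP' : p ^ 2 ≤ L * E := by rw [hpdef]; linarith [neg_sq (f1 y)]
  rcases hp0.eq_or_lt with h | hppos
  · rw [← h]; have := hpos y; simp only [ne_eq, OfNat.ofNat_ne_zero, not_false_eq_true, zero_pow]; positivity
  have hEpos : 0 < E := by
    by_contra hcon
    have : E = 0 := le_antisymm (not_lt.1 hcon) hE0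
    rw [this] at hP'
    nlinarith
  set s := p ^ 2 / E with hs
  have hspos : 0 < s := by positivity
  have hsL : s ≤ L := by rw [hs, div_le_iff₀ hEpos]; exact hP'
  set l := 2 * E ^ 2 / p ^ 3 with hl
  have hlpos : 0 < l := by positivity
  have h0 : 0 ≤ ∫ x in y..(y+s), (f2 x - l * (s + y - x)) ^ 2 :=
    integral_nonneg (by linarith) (fun x _ => sq_nonneg _)
  have e1 : ∫ x in y..(y+s), (f2 x - l * (s + y - x)) ^ 2 =
      (∫ x in y..(y+s), f2 x ^ 2) - 2 * l * (∫ x in y..(y+s), (s + y - x) * f2 x) +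
        l ^ 2 * ∫ x in y..(y+s), (s + y - x) ^ 2 := by
    have : ∀ x, (f2 x - l * (s + y - x)) ^ 2 =
      f2 x ^ 2 - 2 * l * ((s + y - x) * f2 x) + l ^ 2 * (s + y - x) ^ 2 := fun x => by ring
    simp only [this]
    rw [integral_add, integral_sub, integral_const_mul, integral_const_mul]
    all_goals exact Continuous.intervalIntegrable (by fun_prop) _ _
  have e2 : ∫ x in y..(y+s), (s + y - x) * f2 x = f (y + s) - f y + s * p := by
    have hd : ∀ x, HasDerivAt (fun x => (s + y - x) * f1 x + f x) ((s + y - x) * f2 x) x := by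
      intro x
      have a1 : HasDerivAt (fun x : ℝ => s + y - x) (-1) x := by
        simpa using (hasDerivAt_id x).const_sub (s + y)
      have := (a1.mul (hf1 x)).add (hf x)
      exact this.congr_deriv (by ring)
    rw [integral_eq_sub_of_hasDerivAt (fun x _ => hd x)
      (Continuous.intervalIntegrable (by fun_prop) _ _), hpdef]
    ring
  have e3 : ∫ x in y..(y+s), (s + y - x) ^ 2 = s ^ 3 / 3 := by
    have hd : ∀ x, HasDerivAt (fun x => - (s + y - x) ^ 3 / 3) ((s + y - x) ^ 2) x := by
      intro x
      have a1 : HasDerivAt (fun x : ℝ => s + y - x) (-1) x := by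
        simpa using (hasDerivAt_id x).const_sub (s + y)
      have := ((a1.pow 3).neg).div_const 3
      exact this.congr_deriv (by norm_num)
    rw [integral_eq_sub_of_hasDerivAt (fun x _ => hd x)
      (Continuous.intervalIntegrable (by fun_prop) _ _)]
    ring
  have e4 : ∫ x in y..(y+s), f2 x ^ 2 ≤ E :=
    mono_aux (fun x => f2 x ^ 2) (by fun_prop) (fun x => sq_nonneg _) L
      (fun x => by simp only [hp2 x]) y (y + s) (by linarith) (by linarith)
  rw [e1, e2, e3] at h0
  have hy1 := hpos (y + s)
  have h5 : 0 ≤ E - 2 * l * (s * p - f y) + l ^ 2 * (s ^ 3 / 3) := by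
    have := mul_pos hlpos hy1
    nlinarith
  have h6 : l * s * p = 2 * E := by rw [hl, hs]; field_simp
  have h7 : l ^ 2 * s ^ 3 = 4 * E := by rw [hl, hs]; field_simp; norm_num
  have h8 : l * p ^ 3 = 2 * E ^ 2 := by rw [hl]; field_simp
  have h9 : 5 * E / 6 ≤ l * f y := by nlinarith
  have h10 : 5 * E / 6 * p ^ 3 ≤ 2 * E ^ 2 * f y := by
    have := mul_le_mul_of_nonneg_right h9 (by positivity : 0 ≤ p ^ 3)
    calc _ ≤ _ := this
      _ = (l * p ^ 3) * f y := by ring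
      _ = _ := by rw [h8]
  have h11 : 5 / 6 * p ^ 3 ≤ 2 * E * f y := by
    by_contra hcon
    push Not at hcon
    have := mul_lt_mul_of_pos_left hcon hEpos
    nlinarith
  have := mul_pos hEpos (hpos y)
  nlinarith

open intervalIntegral in
theorem slope_aux (L : ℝ) (hL : 0 < L) (f f1 f2 : ℝ → ℝ) (hf : ∀ x, HasDerivAt f (f1 x) x)
    (hf1 : ∀ x, HasDerivAt f1 (f2 x) x) (hc : Continuous f2)
    (hp : Function.Periodic f L) (hpos : ∀ x, 0 < f x) (y : ℝ) :
    |f1 y| ^ 3 ≤ 3 * f y * ∫ x in (0:ℝ)..L, f2 x ^ 2 := by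
  rcases le_total (f1 y) 0 with h | h
  · exact slope_neg_aux L hL f f1 f2 hf hf1 hc hp hpos y h
  · have hp1 := periodic_deriv_aux L f f1 hf hp
    have hp2 := periodic_deriv_aux L f1 f2 hf1 hp1
    have := slope_neg_aux L hL (fun x => f (-x)) (fun x => - f1 (-x)) (fun x => f2 (-x))
      (fun x => by
        have := (hf (-x)).comp x (hasDerivAt_neg x)
        exact this.congr_deriv (by ring))
      (fun x => by
        have := ((hf1 (-x)).comp x (hasDerivAt_neg x)).neg
        exact this.congr_deriv (by ring))
      (by fun_prop)
      (fun x => by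
        have := hp (-(x + L)); simp only; rw [← this]; congr 1; ring)
      (fun x => hpos _) (-y) (by simpa using h)
    simp only [neg_neg, abs_neg] at this
    have e : ∫ x in (0:ℝ)..L, f2 (-x) ^ 2 = ∫ x in (0:ℝ)..L, f2 x ^ 2 := by
      rw [integral_comp_neg (fun x => f2 x ^ 2)]
      have hq : Function.Periodic (fun x => f2 x ^ 2) L := fun x => by simp only [hp2 x]
      have := hq.intervalIntegral_add_eq (-L) 0
      simpa using this
    rwa [e] at this

theorem exists_max_periodic (L : ℝ) (hL : 0 < L) (f : ℝ → ℝ) (hf : Continuous f)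
    (hp : Function.Periodic f L) : ∃ y, ∀ x, f x ≤ f y := by
  obtain ⟨y, _, hy⟩ := isCompact_Icc.exists_isMaxOn (s := Set.Icc (0:ℝ) L)
    ⟨0, by simp [hL.le]⟩ hf.continuousOn
  refine ⟨y, fun x => ?_⟩
  obtain ⟨z, hz, hxz⟩ := hp.exists_mem_Ico₀ hL x
  rw [hxz]
  exact hy ⟨hz.1, hz.2.le⟩

open intervalIntegral in
/-- key estimate for the maximal slope -/
theorem key_aux (L : ℝ) (hL : 0 < L) (f f1 f2 f3 : ℝ → ℝ) (hf : ∀ x, HasDerivAt f (f1 x) x)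
    (hf1 : ∀ x, HasDerivAt f1 (f2 x) x) (hf2 : ∀ x, HasDerivAt f2 (f3 x) x) (hc : Continuous f3)
    (hp : Function.Periodic f L) (hpos : ∀ x, 0 < f x) (κ : ℝ) (hκ : 0 < κ)
    (y : ℝ) (hy : ∀ x, |f1 x| ≤ |f1 y|) :
    |f1 y| ^ 3 ≤ 9 * κ * (∫ x in (0:ℝ)..L, f2 x ^ 2) ∨
    |f1 y| ^ 4 ≤ 16 * L * ∫ x in (0:ℝ)..L, f x ^ 4 / (κ ^ 2 + f x ^ 2) * f3 x ^ 2 := by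
  have hp1 := periodic_deriv_aux L f f1 hf hp
  have hp2 := periodic_deriv_aux L f1 f2 hf1 hp1
  have hp3 := periodic_deriv_aux L f2 f3 hf2 hp2
  have hcf : Continuous f := continuous_iff_continuousAt.2 fun x => (hf x).continuousAt
  have hcf1 : Continuous f1 := continuous_iff_continuousAt.2 fun x => (hf1 x).continuousAt
  have hcf2 : Continuous f2 := continuous_iff_continuousAt.2 fun x => (hf2 x).continuousAt
  have hsl := slope_aux L hL f f1 f2 hf hf1 hcf2 hp hpos
  set E := ∫ x in (0:ℝ)..L, f2 x ^ 2 with hE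
  have hE0 : 0 ≤ E := integral_nonneg hL.le (fun x _ => sq_nonneg _)
  set D := ∫ x in (0:ℝ)..L, f x ^ 4 / (κ ^ 2 + f x ^ 2) * f3 x ^ 2 with hD
  -- global minimum point
  obtain ⟨xm, hxm⟩ := exists_max_periodic L hL (fun x => - f x) (by fun_prop)
    (fun x => by simp only [hp x])
  have hmin : ∀ x, f xm ≤ f x := fun x => by have := hxm x; linarith
  set κ' := max κ (f xm) with hκ'
  have hQ : ∀ x, f x ≤ κ' → |f1 x| ^ 3 ≤ 3 * κ * E := by
    intro x hx
    rcases le_max_iff.1 hx with h | h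
    · refine (hsl x).trans ?_
      gcongr
    · have : IsLocalMin f x := Filter.Eventually.of_forall fun z => h.trans (hmin z)
      rw [this.hasDerivAt_eq_zero (hf x)]
      simp only [abs_zero, ne_eq, OfNat.ofNat_ne_zero, not_false_eq_true, zero_pow]
      positivity
  by_cases hyκ : f y ≤ κ'
  · left
    have := hQ y hyκ
    have : 0 ≤ κ * E := by positivity
    nlinarith
  push Not at hyκ
  -- first hitting point
  obtain ⟨x1, hx1, hfx1⟩ := hp.exists_mem_Ico hL xm y
  have hcomp : IsCompact (Set.Icc y (y + L) ∩ {x | f x ≤ κ'}) :=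
    isCompact_Icc.inter_right (isClosed_le hcf continuous_const)
  obtain ⟨β, hβ⟩ := hcomp.exists_isLeast ⟨x1, ⟨hx1.1, hx1.2.le⟩, by
    show f x1 ≤ κ'
    rw [← hfx1]; exact le_max_right _ _⟩
  have hyβ : y ≤ β := hβ.1.1.1
  have hβL : β ≤ y + L := hβ.1.1.2
  have hβκ : f β ≤ κ' := hβ.1.2
  have hfβ : f β = κ' := by
    obtain ⟨z, hz, hfz⟩ := intermediate_value_Icc' hyβ hcf.continuousOn ⟨hβκ, hyκ.le⟩
    have : β ≤ z := hβ.2 ⟨⟨hz.1, hz.2.trans hβL⟩, hfz.le⟩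
    rw [le_antisymm this hz.2, hfz]
  have hge : ∀ x ∈ Set.Icc y β, κ' ≤ f x := by
    intro x hx
    by_contra hcon
    push Not at hcon
    have : β ≤ x := hβ.2 ⟨⟨hx.1, hx.2.trans hβL⟩, hcon.le⟩
    have : x = β := le_antisymm hx.2 this
    rw [this, hfβ] at hcon
    exact lt_irrefl _ hcon
  -- the quantity w
  have hw : ∀ x, HasDerivAt (fun x => (f x - κ') * f2 x - f1 x ^ 2 / 2) ((f x - κ') * f3 x) x := by
    intro x
    have := (((hf x).sub_const κ').mul (hf2 x)).sub (((hf1 x).pow 2).div_const 2)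
    exact this.congr_deriv (by norm_num; ring)
  have hint : ∫ x in y..β, (f x - κ') * f3 x =
      - f1 β ^ 2 / 2 - ((f y - κ') * f2 y - f1 y ^ 2 / 2) := by
    rw [integral_eq_sub_of_hasDerivAt (fun x _ => hw x)
      (Continuous.intervalIntegrable (by fun_prop) _ _), hfβ]
    ring
  have hcs := cs_aux (fun x => (f x - κ') * f3 x) (by fun_prop) y β hyβ
  have hden : ∀ x, κ ^ 2 + f x ^ 2 ≠ 0 := fun x => by positivity
  have hcD : Continuous fun x => f x ^ 4 / (κ ^ 2 + f x ^ 2) * f3 x ^ 2 := by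
    fun_prop (disch := exact hden _)
  have hle : ∫ x in y..β, ((f x - κ') * f3 x) ^ 2 ≤ D := by
    calc _ ≤ ∫ x in y..β, f x ^ 4 / (κ ^ 2 + f x ^ 2) * f3 x ^ 2 := by
          apply integral_mono_on hyβ (Continuous.intervalIntegrable (by fun_prop) _ _)
            (hcD.intervalIntegrable _ _)
          intro x hx
          rw [mul_pow]
          gcongr
          have h1 := hge x hx
          have h2 : κ ≤ κ' := le_max_left _ _
          have h3 := hpos x
          rw [le_div_iff₀ (by positivity)]
          have h4 : (f x - κ') ^ 2 ≤ (f x - κ) ^ 2 := by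
            apply pow_le_pow_left₀ <;> linarith
          have h5 : (f x - κ) ^ 2 ≤ f x ^ 2 - κ ^ 2 := by nlinarith
          calc (f x - κ') ^ 2 * (κ ^ 2 + f x ^ 2) ≤ (f x ^ 2 - κ ^ 2) * (κ ^ 2 + f x ^ 2) := by
                gcongr; exact h4.trans h5
            _ = f x ^ 4 - κ ^ 4 := by ring
            _ ≤ f x ^ 4 := by have : 0 < κ ^ 4 := by positivity
                              linarith
      _ ≤ D := by
          apply mono_aux _ hcD (fun x => by positivity) L (fun x => by simp only [hp x, hp3 x])
            y β hyβ hβL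
  have hy2 : f1 y * f2 y = 0 := by
    have hm : IsLocalMax (fun x => f1 x ^ 2) y := Filter.Eventually.of_forall fun z => by
      simp only
      rw [← sq_abs (f1 z), ← sq_abs (f1 y)]
      exact pow_le_pow_left₀ (abs_nonneg _) (hy z) 2
    have := hm.hasDerivAt_eq_zero ((hf1 y).pow 2)
    norm_num at this
    rcases this with h | h <;> simp [h]
  rcases mul_eq_zero.1 hy2 with h | h
  · left
    rw [h]
    simp only [abs_zero, ne_eq, OfNat.ofNat_ne_zero, not_false_eq_true, zero_pow]
    positivity
  rw [h] at hint
  rw [hint] at hcs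
  have hD0 : 0 ≤ D := integral_nonneg hL.le (fun x _ => by positivity)
  have hδ : (- f1 β ^ 2 / 2 - ((f y - κ') * 0 - f1 y ^ 2 / 2)) ^ 2 ≤ L * D := by
    refine hcs.trans ?_
    have h1 : β - y ≤ L := by linarith
    have h2 : 0 ≤ β - y := by linarith
    calc _ ≤ (β - y) * D := by gcongr
      _ ≤ _ := by gcongr
  have hβQ := hQ β hβκ
  rw [← sq_abs (f1 β), ← sq_abs (f1 y)] at hδ
  set q := |f1 β|
  set m := |f1 y|
  have hq0 : 0 ≤ q := abs_nonneg _
  have hm0 : 0 ≤ m := abs_nonneg _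
  by_cases hcase : m ^ 2 ≤ 2 * q ^ 2
  · left
    have h1 : m ≤ 2 * q := by nlinarith
    have h3 : m ^ 3 ≤ 3 * q ^ 3 := by
      have h6 : (m ^ 3) ^ 2 ≤ (3 * q ^ 3) ^ 2 := by
        have : (m ^ 2) ^ 3 ≤ (2 * q ^ 2) ^ 3 := pow_le_pow_left₀ (by positivity) hcase 3
        have h7 : 0 ≤ (q ^ 2) ^ 3 := by positivity
        nlinarith
      exact le_of_sq_le_sq h6 (by positivity)
    linarith
  · right
    push Not at hcase
    have h1 : m ^ 2 / 4 ≤ - q ^ 2 / 2 + m ^ 2 / 2 := by linarith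
    have h2 : (m ^ 2 / 4) ^ 2 ≤ (- q ^ 2 / 2 + m ^ 2 / 2) ^ 2 :=
      pow_le_pow_left₀ (by positivity) h1 2
    nlinarith

open intervalIntegral in
theorem func_ineq (L : ℝ) (hL : 0 < L) (f f1 f2 f3 : ℝ → ℝ) (hf : ∀ x, HasDerivAt f (f1 x) x)
    (hf1 : ∀ x, HasDerivAt f1 (f2 x) x) (hf2 : ∀ x, HasDerivAt f2 (f3 x) x) (hc : Continuous f3)
    (hp : Function.Periodic f L) (hpos : ∀ x, 0 < f x) (ε K : ℝ) (hε : 0 < ε) (hK : 0 < K)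
    (hfK : ∀ x, f x ≤ K) (u a : ℝ) (hu : u = (1 / L) * ∫ x in (0:ℝ)..L, f x)
    (ha : a = u ^ 2 / Real.sqrt (ε + K ^ 2)) :
    a ^ 2 * ((1 / 2) * ∫ x in (0:ℝ)..L, f1 x ^ 2) ≤ (9 * L ^ 2 + 32 * L ^ 4) *
      ((∫ x in (0:ℝ)..L, f x ^ 4 / (ε + f x ^ 2) * f3 x ^ 2) +
        Real.sqrt ε * a * ∫ x in (0:ℝ)..L, f2 x ^ 2) := by
  have hp1 := periodic_deriv_aux L f f1 hf hp
  have hp2 := periodic_deriv_aux L f1 f2 hf1 hp1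
  have hp3 := periodic_deriv_aux L f2 f3 hf2 hp2
  have hcf : Continuous f := continuous_iff_continuousAt.2 fun x => (hf x).continuousAt
  have hcf1 : Continuous f1 := continuous_iff_continuousAt.2 fun x => (hf1 x).continuousAt
  have hcf2 : Continuous f2 := continuous_iff_continuousAt.2 fun x => (hf2 x).continuousAt
  obtain ⟨y, hy⟩ := exists_max_periodic L hL (fun x => |f1 x|) (by fun_prop)
    (fun x => by simp only [hp1 x])
  obtain ⟨x0, hx0⟩ := exists_max_periodic L hL f hcf hp
  have hκ : 0 < Real.sqrt ε := Real.sqrt_pos.2 hε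
  have hkey := key_aux L hL f f1 f2 f3 hf hf1 hf2 hc hp hpos (Real.sqrt ε) hκ y hy
  rw [Real.sq_sqrt hε.le] at hkey
  have hden : ∀ x, ε + f x ^ 2 ≠ 0 := fun x => by positivity
  have hcD : Continuous fun x => f x ^ 4 / (ε + f x ^ 2) * f3 x ^ 2 := by
    fun_prop (disch := exact hden _)
  set κ := Real.sqrt ε with hκdef
  set E := ∫ x in (0:ℝ)..L, f2 x ^ 2 with hE
  have hE0 : 0 ≤ E := integral_nonneg hL.le (fun x _ => sq_nonneg _)
  set D := ∫ x in (0:ℝ)..L, f x ^ 4 / (ε + f x ^ 2) * f3 x ^ 2 with hD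
  have hD0 : 0 ≤ D := integral_nonneg hL.le (fun x _ => by positivity)
  set m := |f1 y| with hm
  have hm0 : 0 ≤ m := abs_nonneg _
  have hJ : ∫ x in (0:ℝ)..L, f1 x ^ 2 ≤ L * m ^ 2 := by
    calc _ ≤ ∫ x in (0:ℝ)..L, m ^ 2 := by
          apply integral_mono_on hL.le (Continuous.intervalIntegrable (by fun_prop) _ _)
            (Continuous.intervalIntegrable (by fun_prop) _ _)
          intro x _
          rw [← sq_abs (f1 x)]
          exact pow_le_pow_left₀ (abs_nonneg _) (hy x) 2
      _ = _ := by simp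
  have hint0 : ∫ x in (0:ℝ)..L, f x ≤ L * f x0 := by
    calc _ ≤ ∫ x in (0:ℝ)..L, f x0 := by
          apply integral_mono_on hL.le (Continuous.intervalIntegrable (by fun_prop) _ _)
            (Continuous.intervalIntegrable (by fun_prop) _ _)
          intro x _
          exact hx0 x
      _ = _ := by simp
  have hux0 : u ≤ f x0 := by
    rw [hu, one_div, inv_mul_le_iff₀ hL]; exact hint0
  have huK : u ≤ K := hux0.trans (hfK x0)
  have hu0 : 0 ≤ u := by
    rw [hu]
    have : 0 ≤ ∫ x in (0:ℝ)..L, f x := integral_nonneg hL.le (fun x _ => (hpos x).le)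
    positivity
  set R := Real.sqrt (ε + K ^ 2) with hR
  have hR0 : 0 < R := Real.sqrt_pos.2 (by positivity)
  have hRsq : R ^ 2 = ε + K ^ 2 := Real.sq_sqrt (by positivity)
  have hKR : K ≤ R := Real.le_sqrt_of_sq_le (by linarith)
  have ha0 : 0 ≤ a := by rw [ha]; positivity
  have hau : a ≤ u := by
    rw [ha, div_le_iff₀ hR0]
    nlinarith
  by_cases hcase : u ≤ 2 * L * m
  · have ham : a ≤ 2 * L * m := hau.trans hcase
    have hJ2 : a ^ 2 * ((1 / 2) * ∫ x in (0:ℝ)..L, f1 x ^ 2) ≤ a ^ 2 * ((1 / 2) * (L * m ^ 2)) := by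
      gcongr
    refine hJ2.trans ?_
    have hκaE : 0 ≤ κ * a * E := by positivity
    rcases hkey with h | h
    · calc a ^ 2 * ((1 / 2) * (L * m ^ 2)) = a * (a * ((1 / 2) * (L * m ^ 2))) := by ring
        _ ≤ a * ((2 * L * m) * ((1 / 2) * (L * m ^ 2))) := by gcongr
        _ = a * L ^ 2 * m ^ 3 := by ring
        _ ≤ a * L ^ 2 * (9 * κ * E) := by gcongr
        _ = 9 * L ^ 2 * (κ * a * E) := by ring
        _ ≤ _ := by
          gcongr
          · have : 0 ≤ L ^ 4 := by positivity
            linarith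
          · linarith
    · calc a ^ 2 * ((1 / 2) * (L * m ^ 2)) ≤ (2 * L * m) ^ 2 * ((1 / 2) * (L * m ^ 2)) := by gcongr
        _ = 2 * L ^ 3 * m ^ 4 := by ring
        _ ≤ 2 * L ^ 3 * (16 * L * D) := by gcongr
        _ = 32 * L ^ 4 * D := by ring
        _ ≤ _ := by
          gcongr
          · have : 0 ≤ L ^ 2 := by positivity
            linarith
          · linarith
  · push Not at hcase
    have hlow : ∀ x, u / 2 ≤ f x := by
      intro x
      obtain ⟨z, hz, hxz⟩ := hp.exists_mem_Ico hL x x0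
      rw [hxz]
      have h1 : f z - f x0 = ∫ s in x0..z, f1 s :=
        (integral_eq_sub_of_hasDerivAt (fun s _ => hf s) (hcf1.intervalIntegrable _ _)).symm
      have h2 : ‖∫ s in x0..z, f1 s‖ ≤ m * |z - x0| :=
        norm_integral_le_of_norm_le_const (fun s _ => hy s)
      rw [← h1, Real.norm_eq_abs, abs_of_nonneg (by linarith [hz.1] : 0 ≤ z - x0)] at h2
      have h3 : m * (z - x0) ≤ m * L := by gcongr; linarith [hz.2]
      have := (abs_le.1 h2).1
      linarith
    have hg : ∀ x, a ^ 2 / 16 ≤ f x ^ 4 / (ε + f x ^ 2) := by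
      intro x
      have h1 := hpos x
      have h2 : (u / 2) ^ 4 ≤ f x ^ 4 := pow_le_pow_left₀ (by positivity) (hlow x) 4
      have h3 : f x ^ 2 ≤ K ^ 2 := pow_le_pow_left₀ h1.le (hfK x) 2
      have h4 : a ^ 2 / 16 = (u / 2) ^ 4 / (ε + K ^ 2) := by
        rw [ha, ← hRsq]; field_simp; norm_num
      rw [h4]
      gcongr
    have hD3 : a ^ 2 / 16 * ∫ x in (0:ℝ)..L, f3 x ^ 2 ≤ D := by
      rw [← integral_const_mul]
      apply integral_mono_on hL.le (Continuous.intervalIntegrable (by fun_prop) _ _)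
        (hcD.intervalIntegrable _ _)
      intro x _
      have := hg x
      gcongr
    obtain ⟨z1, hz1⟩ := rolle_aux L hL f f1 hf hp
    obtain ⟨z2, hz2⟩ := rolle_aux L hL f1 f2 hf1 hp1
    have hP1 := poinc_aux L hL f1 f2 hf1 hcf2 hp1 hp2 z1 hz1 y
    have hP2 := poinc_aux L hL f2 f3 hf2 hc hp2 hp3 z2 hz2
    set G := ∫ x in (0:ℝ)..L, f3 x ^ 2 with hG
    have hE2 : E ≤ L * (L * G) := by
      calc _ ≤ ∫ x in (0:ℝ)..L, (L * G) := by
            apply integral_mono_on hL.le (Continuous.intervalIntegrable (by fun_prop) _ _)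
              (Continuous.intervalIntegrable (by fun_prop) _ _)
            intro x _
            exact hP2 x
        _ = _ := by simp
    rw [← sq_abs (f1 y), ← hm] at hP1
    calc a ^ 2 * ((1 / 2) * ∫ x in (0:ℝ)..L, f1 x ^ 2) ≤ a ^ 2 * ((1 / 2) * (L * m ^ 2)) := by
          gcongr
      _ ≤ a ^ 2 * ((1 / 2) * (L * (L * E))) := by gcongr
      _ ≤ a ^ 2 * ((1 / 2) * (L * (L * (L * (L * G))))) := by gcongr
      _ = 8 * L ^ 4 * (a ^ 2 / 16 * G) := by ring
      _ ≤ 8 * L ^ 4 * D := by gcongr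
      _ ≤ _ := by
          have hκaE : 0 ≤ κ * a * E := by positivity
          have h4 : 0 ≤ L ^ 4 := by positivity
          have h2 : 0 ≤ L ^ 2 := by positivity
          gcongr
          · linarith
          · linarith

theorem hasDerivAt_integral_aux (L : ℝ) (F F' : ℝ → ℝ → ℝ)
    (hF : Continuous (Function.uncurry F)) (hF' : Continuous (Function.uncurry F'))
    (hd : ∀ t x, HasDerivAt (fun τ => F τ x) (F' t x) t) (t : ℝ) :
    HasDerivAt (fun τ => ∫ x in (0:ℝ)..L, F τ x) (∫ x in (0:ℝ)..L, F' t x) t := by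
  obtain ⟨C, hC⟩ := (isCompact_Icc.prod isCompact_uIcc :
    IsCompact (Set.Icc (t - 1) (t + 1) ×ˢ Set.uIcc (0:ℝ) L)).exists_bound_of_continuousOn
      hF'.continuousOn
  have hs : ∀ τ, Continuous (F τ) := fun τ => hF.comp (by fun_prop : Continuous fun x => (τ, x))
  have hs' : ∀ τ, Continuous (F' τ) := fun τ => hF'.comp (by fun_prop : Continuous fun x => (τ, x))
  refine (intervalIntegral.hasDerivAt_integral_of_dominated_loc_of_deriv_le (F := F) (F' := F') (x₀ := t)
    (bound := fun _ => C) (Icc_mem_nhds (by linarith) (by linarith) : Set.Icc (t - 1) (t + 1) ∈ _)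
    ?_ ?_ ?_ ?_ ?_ ?_).2
  · exact Filter.Eventually.of_forall fun τ => (hs τ).aestronglyMeasurable
  · exact (hs t).intervalIntegrable _ _
  · exact (hs' t).aestronglyMeasurable
  · exact Filter.Eventually.of_forall fun x hx τ hτ => hC (τ, x) ⟨hτ, Set.uIoc_subset_uIcc hx⟩
  · exact continuous_const.intervalIntegrable _ _
  · exact Filter.Eventually.of_forall fun x _ τ _ => hd τ x

theorem slice_x (v : ℝ → ℝ → ℝ) (hv : ContDiff ℝ (⊤ : ℕ∞) (Function.uncurry v)) (t x : ℝ) :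
    HasDerivAt (v t) (fderiv ℝ (Function.uncurry v) (t, x) (0, 1)) x := by
  have h1 : HasFDerivAt (Function.uncurry v) (fderiv ℝ (Function.uncurry v) (t, x)) (t, x) :=
    ((hv.differentiable (by simp)) (t, x)).hasFDerivAt
  have h2 : HasDerivAt (fun y : ℝ => (t, y)) ((0 : ℝ), (1 : ℝ)) x :=
    (hasDerivAt_const x t).prodMk (hasDerivAt_id x)
  exact h1.comp_hasDerivAt x h2

theorem slice_t (v : ℝ → ℝ → ℝ) (hv : ContDiff ℝ (⊤ : ℕ∞) (Function.uncurry v)) (t x : ℝ) :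
    HasDerivAt (fun τ => v τ x) (fderiv ℝ (Function.uncurry v) (t, x) (1, 0)) t := by
  have h1 : HasFDerivAt (Function.uncurry v) (fderiv ℝ (Function.uncurry v) (t, x)) (t, x) :=
    ((hv.differentiable (by simp)) (t, x)).hasFDerivAt
  have h2 : HasDerivAt (fun y : ℝ => (y, x)) ((1 : ℝ), (0 : ℝ)) t :=
    (hasDerivAt_id t).prodMk (hasDerivAt_const t x)
  exact h1.comp_hasDerivAt t h2

theorem smooth_fderiv_apply (V : ℝ × ℝ → ℝ) (hV : ContDiff ℝ (⊤ : ℕ∞) V) (e : ℝ × ℝ) :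
    ContDiff ℝ (⊤ : ℕ∞) (fun p => fderiv ℝ V p e) :=
  (hV.fderiv_right (m := ((⊤ : ℕ∞) : WithTop ℕ∞)) (by simp)).clm_apply contDiff_const

theorem smooth_x (v : ℝ → ℝ → ℝ) (hv : ContDiff ℝ (⊤ : ℕ∞) (Function.uncurry v)) :
    ContDiff ℝ (⊤ : ℕ∞) (Function.uncurry fun t => deriv (v t)) := by
  have : (Function.uncurry fun t => deriv (v t)) =
      fun p => fderiv ℝ (Function.uncurry v) p (0, 1) := by
    funext p
    exact (slice_x v hv p.1 p.2).deriv
  rw [this]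
  exact smooth_fderiv_apply _ hv _

theorem smooth_t (v : ℝ → ℝ → ℝ) (hv : ContDiff ℝ (⊤ : ℕ∞) (Function.uncurry v)) :
    ContDiff ℝ (⊤ : ℕ∞) (Function.uncurry fun t x => deriv (fun τ => v τ x) t) := by
  have : (Function.uncurry fun t x => deriv (fun τ => v τ x) t) =
      fun p => fderiv ℝ (Function.uncurry v) p (1, 0) := by
    funext p
    exact (slice_t v hv p.1 p.2).deriv
  rw [this]
  exact smooth_fderiv_apply _ hv _

theorem swap_aux (v : ℝ → ℝ → ℝ) (hv : ContDiff ℝ (⊤ : ℕ∞) (Function.uncurry v)) (t x : ℝ) :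
    deriv (fun τ => deriv (v τ) x) t = deriv (fun y => deriv (fun τ => v τ y) t) x := by
  have e1 : (Function.uncurry fun t => deriv (v t)) =
      fun p => fderiv ℝ (Function.uncurry v) p (0, 1) := by
    funext p
    exact (slice_x v hv p.1 p.2).deriv
  have e2 : (Function.uncurry fun t x => deriv (fun τ => v τ x) t) =
      fun p => fderiv ℝ (Function.uncurry v) p (1, 0) := by
    funext p
    exact (slice_t v hv p.1 p.2).deriv
  have h1 := (slice_t (fun t => deriv (v t)) (smooth_x v hv) t x).deriv
  have h2 := (slice_x (fun t x => deriv (fun τ => v τ x) t) (smooth_t v hv) t x).deriv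
  rw [e1] at h1
  rw [e2] at h2
  have hd : DifferentiableAt ℝ (fderiv ℝ (Function.uncurry v)) (t, x) :=
    ((hv.fderiv_right (m := ((⊤ : ℕ∞) : WithTop ℕ∞)) (by simp)).differentiable (by simp)) _
  have hsym : IsSymmSndFDerivAt ℝ (Function.uncurry v) (t, x) :=
    (contDiff_infty.1 hv 2).contDiffAt.isSymmSndFDerivAt (by simp)
  have key : ∀ e : ℝ × ℝ, fderiv ℝ (fun p => fderiv ℝ (Function.uncurry v) p e) (t, x) =
      (fderiv ℝ (fderiv ℝ (Function.uncurry v)) (t, x)).flip e := by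
    intro e
    rw [fderiv_clm_apply hd (differentiableAt_const _)]
    simp
  rw [key] at h1 h2
  rw [h1]
  refine Eq.trans ?_ h2.symm
  exact hsym _ _

open intervalIntegral in
theorem ibp_aux (L : ℝ) (f f' g g' : ℝ → ℝ) (hf : ∀ x, HasDerivAt f (f' x) x)
    (hg : ∀ x, HasDerivAt g (g' x) x) (hf' : Continuous f') (hg' : Continuous g')
    (hpf : Function.Periodic f L) (hpg : Function.Periodic g L) :
    ∫ x in (0:ℝ)..L, f x * g' x = - ∫ x in (0:ℝ)..L, f' x * g x := by
  rw [integral_mul_deriv_eq_deriv_mul (fun x _ => hf x) (fun x _ => hg x)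
    (hf'.intervalIntegrable _ _) (hg'.intervalIntegrable _ _)]
  have h1 := hpf 0
  have h2 := hpg 0
  rw [zero_add] at h1 h2
  rw [h1, h2]
  ring

open intervalIntegral in
theorem gronwall_aux (T c b : ℝ) (hc : 0 ≤ c) (hb : 0 ≤ b) (J J' E : ℝ → ℝ)
    (hJ : ∀ t ∈ Set.Icc (0:ℝ) T, HasDerivAt J (J' t) t) (hE : Continuous E) (hE0 : ∀ t, 0 ≤ E t)
    (hle : ∀ t ∈ Set.Icc (0:ℝ) T, J' t ≤ - c * J t + b * E t) (t : ℝ)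
    (ht : t ∈ Set.Icc (0:ℝ) T) :
    J t ≤ Real.exp (- c * t) * J 0 + b * ∫ s in (0:ℝ)..t, E s := by
  have hcE : Continuous fun s => Real.exp (c * s) * E s := by fun_prop
  have hd : ∀ s ∈ Set.Icc (0:ℝ) T, HasDerivAt
      (fun s => Real.exp (c * s) * J s - b * ∫ r in (0:ℝ)..s, Real.exp (c * r) * E r)
      (Real.exp (c * s) * (c * J s + J' s - b * E s)) s := by
    intro s hs
    have h1 : HasDerivAt (fun s => Real.exp (c * s)) (Real.exp (c * s) * c) s := by
      have := ((hasDerivAt_id s).const_mul c).exp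
      simpa using this
    have h2 := (hcE.integral_hasStrictDerivAt 0 s).hasDerivAt
    have := (h1.mul (hJ s hs)).sub (h2.const_mul b)
    exact this.congr_deriv (by ring)
  have hanti : AntitoneOn
      (fun s => Real.exp (c * s) * J s - b * ∫ r in (0:ℝ)..s, Real.exp (c * r) * E r)
      (Set.Icc 0 T) := by
    apply antitoneOn_of_deriv_nonpos (convex_Icc _ _)
    · exact fun s hs => (hd s hs).continuousAt.continuousWithinAt
    · exact fun s hs => (hd s (interior_subset hs)).differentiableAt.differentiableWithinAt
    · intro s hs
      rw [(hd s (interior_subset hs)).deriv]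
      have := hle s (interior_subset hs)
      exact mul_nonpos_of_nonneg_of_nonpos (Real.exp_pos _).le (by linarith)
  have h0 := hanti ⟨le_rfl, ht.1.trans ht.2⟩ ht ht.1
  simp only [mul_zero, Real.exp_zero, one_mul, integral_same, sub_zero] at h0
  have h1 : ∫ r in (0:ℝ)..t, Real.exp (c * r) * E r ≤
      Real.exp (c * t) * ∫ r in (0:ℝ)..t, E r := by
    rw [← integral_const_mul]
    apply integral_mono_on ht.1 (hcE.intervalIntegrable _ _)
      (Continuous.intervalIntegrable (by fun_prop) _ _)
    intro r hr
    have := hE0 r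
    have := hr.2
    gcongr
  have h2 : Real.exp (c * t) * J t ≤ J 0 + b * (Real.exp (c * t) * ∫ r in (0:ℝ)..t, E r) := by
    have := mul_le_mul_of_nonneg_left h1 hb
    linarith
  have h3 : Real.exp (-c * t) * Real.exp (c * t) = 1 := by
    rw [← Real.exp_add]; simp
  have h4 := mul_le_mul_of_nonneg_left h2 (Real.exp_pos (-c * t)).le
  calc J t = (Real.exp (-c * t) * Real.exp (c * t)) * J t := by rw [h3, one_mul]
    _ = Real.exp (-c * t) * (Real.exp (c * t) * J t) := by ring
    _ ≤ _ := h4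
    _ = Real.exp (-c * t) * J 0 +
        (Real.exp (-c * t) * Real.exp (c * t)) * (b * ∫ r in (0:ℝ)..t, E r) := by ring
    _ = _ := by rw [h3, one_mul]

/-- Deterministic exponential energy decay estimate (3.35): for every `L > 0` there are
`c₁, c₂ > 0` depending only on `L` such that for every `ε ∈ (0,1]`, `K > 0`, `T > 0`,
and every smooth solution `v` of `∂ₜv = −∂ₓ(f_ε(v) ∂ₓ³v)` on `[0,T] × ℝ`, `L`-periodic
in `x`, with `0 < v ≤ K`, setting `ū = (1/L)∫₀ᴸ v(0)`, `a = ū²/√(ε+K²)` and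
`J(t) = (1/2)∫₀ᴸ (∂ₓv(t))²`, one has for all `t ∈ [0,T]`:
`J(t) ≤ e^{−c₁ a² t} J(0) + c₂ √ε a ∫₀ᵗ∫₀ᴸ (∂ₓ²v)²`. -/
theorem stmt_16 (L : ℝ) (hL : 0 < L) :
    ∃ c₁ c₂ : ℝ, 0 < c₁ ∧ 0 < c₂ ∧
      ∀ (ε K T : ℝ), ε ∈ Set.Ioc (0 : ℝ) 1 → 0 < K → 0 < T →
        ∀ v : ℝ → ℝ → ℝ, ContDiff ℝ (⊤ : ℕ∞) (Function.uncurry v) →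
          (∀ t, Function.Periodic (v t) L) →
          (∀ t ∈ Set.Icc (0 : ℝ) T, ∀ x : ℝ,
            deriv (fun τ => v τ x) t =
              -deriv (fun y => (v t y ^ 4 / (ε + v t y ^ 2)) * deriv^[3] (v t) y) x) →
          (∀ t ∈ Set.Icc (0 : ℝ) T, ∀ x : ℝ, 0 < v t x ∧ v t x ≤ K) →
          ∀ t ∈ Set.Icc (0 : ℝ) T,
            (1 / 2) * ∫ x in (0:ℝ)..L, (deriv (v t) x) ^ 2 ≤
              Real.exp (-c₁ *
                  (((1 / L) * ∫ x in (0:ℝ)..L, v 0 x) ^ 2 / Real.sqrt (ε + K ^ 2)) ^ 2 * t) *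
                ((1 / 2) * ∫ x in (0:ℝ)..L, (deriv (v 0) x) ^ 2) +
              c₂ * Real.sqrt ε *
                (((1 / L) * ∫ x in (0:ℝ)..L, v 0 x) ^ 2 / Real.sqrt (ε + K ^ 2)) *
                ∫ s in (0:ℝ)..t, ∫ x in (0:ℝ)..L, (deriv^[2] (v s) x) ^ 2 := by
  set C : ℝ := 9 * L ^ 2 + 32 * L ^ 4 with hCdef
  have hC : 0 < C := by positivity
  refine ⟨1 / C, 1, by positivity, one_pos, ?_⟩
  intro ε K T hε hK hT v hv hper hpde hbd
  -- spatial derivatives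
  let v1 : ℝ → ℝ → ℝ := fun t => deriv (v t)
  let v2 : ℝ → ℝ → ℝ := fun t => deriv (v1 t)
  let v3 : ℝ → ℝ → ℝ := fun t => deriv (v2 t)
  let vt : ℝ → ℝ → ℝ := fun t x => deriv (fun τ => v τ x) t
  have s1 : ContDiff ℝ (⊤ : ℕ∞) (Function.uncurry v1) := smooth_x v hv
  have s2 : ContDiff ℝ (⊤ : ℕ∞) (Function.uncurry v2) := smooth_x v1 s1
  have s3 : ContDiff ℝ (⊤ : ℕ∞) (Function.uncurry v3) := smooth_x v2 s2
  have st : ContDiff ℝ (⊤ : ℕ∞) (Function.uncurry vt) := smooth_t v hv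
  have stx : ContDiff ℝ (⊤ : ℕ∞) (Function.uncurry fun t => deriv (vt t)) := smooth_x vt st
  have d0 : ∀ t x, HasDerivAt (v t) (v1 t x) x := fun t x =>
    (slice_x v hv t x).differentiableAt.hasDerivAt
  have d1 : ∀ t x, HasDerivAt (v1 t) (v2 t x) x := fun t x =>
    (slice_x v1 s1 t x).differentiableAt.hasDerivAt
  have d2 : ∀ t x, HasDerivAt (v2 t) (v3 t x) x := fun t x =>
    (slice_x v2 s2 t x).differentiableAt.hasDerivAt
  have d3 : ∀ t x, HasDerivAt (v3 t) (deriv (v3 t) x) x := fun t x =>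
    (slice_x v3 s3 t x).differentiableAt.hasDerivAt
  have dt : ∀ t x, HasDerivAt (fun τ => v τ x) (vt t x) t := fun t x =>
    (slice_t v hv t x).differentiableAt.hasDerivAt
  have dtx : ∀ t x, HasDerivAt (vt t) (deriv (vt t) x) x := fun t x =>
    (slice_x vt st t x).differentiableAt.hasDerivAt
  have d1t : ∀ t x, HasDerivAt (fun τ => v1 τ x) (deriv (vt t) x) t := fun t x => by
    have h := (slice_t v1 s1 t x).differentiableAt.hasDerivAt
    have e : deriv (fun τ => v1 τ x) t = deriv (vt t) x := swap_aux v hv t x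
    rwa [e] at h
  have slc : ∀ (w : ℝ → ℝ → ℝ), ContDiff ℝ (⊤ : ℕ∞) (Function.uncurry w) → ∀ t,
      ContDiff ℝ (⊤ : ℕ∞) (w t) := fun w hw t =>
    hw.comp (contDiff_const.prodMk contDiff_id : ContDiff ℝ (⊤ : ℕ∞) fun x : ℝ => (t, x))
  have p1 : ∀ t, Function.Periodic (v1 t) L := fun t =>
    periodic_deriv_aux L (v t) (v1 t) (d0 t) (hper t)
  have p2 : ∀ t, Function.Periodic (v2 t) L := fun t =>
    periodic_deriv_aux L (v1 t) (v2 t) (d1 t) (p1 t)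
  have p3 : ∀ t, Function.Periodic (v3 t) L := fun t =>
    periodic_deriv_aux L (v2 t) (v3 t) (d2 t) (p2 t)
  have pt : ∀ t, Function.Periodic (vt t) L := fun t x => by
    show deriv (fun τ => v τ (x + L)) t = deriv (fun τ => v τ x) t
    congr 1
    funext τ
    exact hper τ x
  -- flux
  let fl : ℝ → ℝ → ℝ := fun t y => (v t y ^ 4 / (ε + v t y ^ 2)) * v3 t y
  have hε0 : 0 < ε := hε.1
  have sfl : ∀ t, ContDiff ℝ (⊤ : ℕ∞) (fl t) := by
    intro t
    have a0 := slc v hv t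
    have a3 := slc v3 s3 t
    exact (((a0.pow 4).div (contDiff_const.add (a0.pow 2)) (fun x => by positivity))).mul a3
  have dfl : ∀ t x, HasDerivAt (fl t) (deriv (fl t) x) x := fun t x =>
    ((sfl t).differentiable (by simp) x).hasDerivAt
  have cfl : ∀ t, Continuous (deriv (fl t)) := fun t => (sfl t).continuous_deriv (by simp)
  have pfl : ∀ t, Function.Periodic (fl t) L := fun t x => by
    simp only [fl, hper t x, p3 t x]
  have hpde' : ∀ t ∈ Set.Icc (0:ℝ) T, ∀ x, vt t x = - deriv (fl t) x := hpde
  -- conservation of mass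
  have hmass : ∀ t ∈ Set.Icc (0:ℝ) T, ∫ x in (0:ℝ)..L, v t x = ∫ x in (0:ℝ)..L, v 0 x := by
    have hd : ∀ t ∈ Set.Icc (0:ℝ) T, HasDerivAt (fun τ => ∫ x in (0:ℝ)..L, v τ x) 0 t := by
      intro t ht
      have h := hasDerivAt_integral_aux L v vt hv.continuous st.continuous dt t
      have e : ∫ x in (0:ℝ)..L, vt t x = 0 := by
        simp only [hpde' t ht]
        rw [intervalIntegral.integral_neg, intervalIntegral.integral_eq_sub_of_hasDerivAt (fun x _ => dfl t x)
          ((cfl t).intervalIntegrable _ _)]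
        have := pfl t 0
        rw [zero_add] at this
        rw [this]; simp
      rwa [e] at h
    intro t ht
    exact constant_of_has_deriv_right_zero
      (fun s hs => (hd s hs).continuousAt.continuousWithinAt)
      (fun s hs => (hd s ⟨hs.1, hs.2.le⟩).hasDerivWithinAt) t ht
  -- energy dissipation
  have hJd : ∀ t ∈ Set.Icc (0:ℝ) T,
      HasDerivAt (fun τ => (1 / 2) * ∫ x in (0:ℝ)..L, v1 τ x ^ 2)
        (- ∫ x in (0:ℝ)..L, v t x ^ 4 / (ε + v t x ^ 2) * v3 t x ^ 2) t := by
    intro t ht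
    have h := (hasDerivAt_integral_aux L (fun t x => v1 t x ^ 2)
      (fun t x => 2 * (v1 t x * deriv (vt t) x)) (s1.continuous.fun_pow 2)
      (continuous_const.fun_mul (s1.continuous.fun_mul stx.continuous))
      (fun t x => ((d1t t x).pow 2).congr_deriv (by norm_num; ring)) t).const_mul (1 / 2)
    refine h.congr_deriv ?_
    rw [intervalIntegral.integral_const_mul, ibp_aux L (v1 t) (v2 t) (vt t) (deriv (vt t)) (d1 t) (dtx t)
      (slc v2 s2 t).continuous (slc _ stx t).continuous (p1 t) (pt t)]
    simp only [hpde' t ht, mul_neg]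
    rw [intervalIntegral.integral_neg, ibp_aux L (v2 t) (v3 t) (fl t) (deriv (fl t)) (d2 t) (dfl t)
      (slc v3 s3 t).continuous (cfl t) (p2 t) (pfl t)]
    have : ∀ x, v3 t x * fl t x = v t x ^ 4 / (ε + v t x ^ 2) * v3 t x ^ 2 := fun x => by
      simp only [fl]; ring
    simp only [this]
    ring
  intro t ht
  set u := (1 / L) * ∫ x in (0:ℝ)..L, v 0 x with hu
  obtain ⟨a, ha⟩ : ∃ a, a = u ^ 2 / Real.sqrt (ε + K ^ 2) := ⟨_, rfl⟩
  rw [← ha]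
  have ha0 : 0 ≤ a := by rw [ha]; positivity
  have hEc : Continuous fun s => ∫ x in (0:ℝ)..L, v2 s x ^ 2 :=
    intervalIntegral.continuous_parametric_intervalIntegral_of_continuous' (f := fun s x => v2 s x ^ 2)
      (s2.continuous.fun_pow 2) 0 L
  have hG := gronwall_aux T (1 / C * a ^ 2) (Real.sqrt ε * a) (by positivity) (by positivity)
    (fun τ => (1 / 2) * ∫ x in (0:ℝ)..L, v1 τ x ^ 2) _ (fun s => ∫ x in (0:ℝ)..L, v2 s x ^ 2)
    hJd hEc (fun s => intervalIntegral.integral_nonneg hL.le fun x _ => sq_nonneg _) (by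
      intro s hs
      have hFI := func_ineq L hL (v s) (v1 s) (v2 s) (v3 s) (d0 s) (d1 s) (d2 s)
        (slc v3 s3 s).continuous (hper s) (fun x => (hbd s hs x).1) ε K hε0 hK
        (fun x => (hbd s hs x).2) u a (by rw [hu, hmass s hs]) ha
      rw [← hCdef] at hFI
      have h2 : 1 / C * (a ^ 2 * ((1 / 2) * ∫ x in (0:ℝ)..L, v1 s x ^ 2)) ≤
        (∫ x in (0:ℝ)..L, v s x ^ 4 / (ε + v s x ^ 2) * v3 s x ^ 2) +
          Real.sqrt ε * a * ∫ x in (0:ℝ)..L, v2 s x ^ 2 := by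
        rw [one_div, inv_mul_le_iff₀ hC]
        exact hFI
      linarith) t ht
  rw [one_mul]
  have e : -(1 / C * a ^ 2) * t = -(1 / C) * a ^ 2 * t := by ring
  rw [e] at hG
  exact hG
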